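/- arXiv:2401.09357 — 2 statements merged into one kernel-verified Lean document; each statement's English description precedes it below -/
import Mathlib

section
/- Let W : ℝ → ℝ be continuous, compactly supported, nonnegative, with ∫_ℝ W(x) dx = 1, let x₀ ∈ ℝ, and define W̃_ε(p) = (2π)^{-1/2} ∫_ℝ ε⁻¹ W((x − x₀)/ε) e^{−ipx} dx. Then for every t ∈ ℝ and every p ∈ ℝ, the integrals ∫_ℝ |φ_t(p,q)| · |(2π)^{-1/2} e^{−i(p−q)x₀} − W̃_ε(p−q)| dq converge to 0 as ε → 0⁺. -/
open MeasureTheory Filter Topology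

/-- The first-order Dyson kernel factor:
`φ_t(p,q) = (e^{it(p²−q²)} − 1)/(i(p²−q²))` if `p² ≠ q²`, and `t` otherwise. -/
noncomputable def phiK (t p q : ℝ) : ℂ :=
  if p ^ 2 = q ^ 2 then (t : ℂ)
  else (Complex.exp (Complex.I * t * ((p : ℂ) ^ 2 - (q : ℂ) ^ 2)) - 1) /
    (Complex.I * ((p : ℂ) ^ 2 - (q : ℂ) ^ 2))

/-- The Fourier transform (convention `ℱg(p) = (2π)^{-1/2} ∫ g(x) e^{-ipx} dx`)
of the shifted mollifier `x ↦ W_ε(x − x₀)`. -/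
noncomputable def mollFT (W : ℝ → ℝ) (x₀ ε p : ℝ) : ℂ :=
  ((Real.sqrt (2 * Real.pi) : ℝ) : ℂ)⁻¹ *
    ∫ x : ℝ, ((ε⁻¹ * W ((x - x₀) / ε) : ℝ) : ℂ) * Complex.exp (-Complex.I * p * x)


noncomputable def auxG (W : ℝ → ℝ) (x₀ : ℝ) (z : ℝ × ℝ) : ℂ :=
  ∫ y : ℝ, (W y : ℂ) * Complex.exp (((-(z.2 * (x₀ + z.1 * y)) : ℝ) : ℂ) * Complex.I)

lemma auxG_continuous (W : ℝ → ℝ) (hWc : Continuous W) (hWs : HasCompactSupport W) (x₀ : ℝ) :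
    Continuous (auxG W x₀) := by
  unfold auxG
  refine continuous_of_dominated (bound := fun y => ‖W y‖) ?_ ?_ ?_ ?_
  · intro z
    exact Continuous.aestronglyMeasurable (by fun_prop)
  · intro z
    refine Eventually.of_forall fun y => ?_
    rw [norm_mul, Complex.norm_exp_ofReal_mul_I]
    simp
  · exact (hWc.integrable_of_hasCompactSupport hWs).norm
  · refine Eventually.of_forall fun y => ?_
    fun_prop

lemma auxG_norm_le (W : ℝ → ℝ) (hWnn : ∀ x, 0 ≤ W x) (hWint : (∫ x : ℝ, W x) = 1)
    (x₀ : ℝ) (z : ℝ × ℝ) : ‖auxG W x₀ z‖ ≤ 1 := by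
  unfold auxG
  refine (norm_integral_le_integral_norm _).trans ?_
  rw [← hWint]
  refine le_of_eq (integral_congr_ae (Eventually.of_forall fun y => ?_))
  simp only [norm_mul, Complex.norm_exp_ofReal_mul_I]
  simp [abs_of_nonneg (hWnn y)]

lemma auxG_zero (W : ℝ → ℝ) (hWint : (∫ x : ℝ, W x) = 1) (x₀ k : ℝ) :
    auxG W x₀ (0, k) = Complex.exp (-Complex.I * k * x₀) := by
  unfold auxG
  simp only [zero_mul, add_zero]
  rw [integral_mul_const, integral_complex_ofReal, hWint]
  simp only [Complex.ofReal_one, one_mul]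
  congr 1
  push_cast
  ring

lemma mollFT_eq (W : ℝ → ℝ) (x₀ ε k : ℝ) (hε : 0 < ε) :
    mollFT W x₀ ε k = ((Real.sqrt (2 * Real.pi) : ℝ) : ℂ)⁻¹ * auxG W x₀ (ε, k) := by
  unfold mollFT auxG
  congr 1
  let h : ℝ → ℂ := fun y => (ε⁻¹ : ℂ) * ((W y : ℂ) *
    Complex.exp (((-(k * (x₀ + ε * y)) : ℝ) : ℂ) * Complex.I))
  have h1 : (fun x : ℝ => ((ε⁻¹ * W ((x - x₀) / ε) : ℝ) : ℂ) *
      Complex.exp (-Complex.I * k * x)) = fun x => h ((x - x₀) / ε) := by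
    funext x
    have : x₀ + ε * ((x - x₀) / ε) = x := by field_simp; ring
    simp only [h, this]
    push_cast
    rw [mul_assoc]
    congr 3
    ring
  rw [h1, integral_sub_right_eq_self (fun x => h (x / ε)) x₀, Measure.integral_comp_div,
    abs_of_pos hε]
  simp only [h]
  rw [integral_const_mul, Complex.real_smul, ← mul_assoc, mul_inv_cancel₀, one_mul]
  exact_mod_cast hε.ne'

lemma phiK_bound (t p q : ℝ) :
    ‖phiK t p q‖ ≤ (|t| * (1 + p ^ 2) + 2) * (1 + q ^ 2)⁻¹ := by
  have h1 : ‖phiK t p q‖ ≤ |t| ∧ ‖phiK t p q‖ * |p ^ 2 - q ^ 2| ≤ 2 := by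
    unfold phiK
    split_ifs with h
    · simp [h]
    · have hne : p ^ 2 - q ^ 2 ≠ 0 := sub_ne_zero.mpr h
      have hpos : 0 < |p ^ 2 - q ^ 2| := abs_pos.mpr hne
      have e1 : ‖Complex.I * ((p : ℂ) ^ 2 - (q : ℂ) ^ 2)‖ = |p ^ 2 - q ^ 2| := by
        rw [norm_mul, Complex.norm_I, one_mul, ← Real.norm_eq_abs, ← Complex.norm_real]
        push_cast
        rfl
      have e2 : Complex.I * t * ((p : ℂ) ^ 2 - (q : ℂ) ^ 2)
          = Complex.I * ((t * (p ^ 2 - q ^ 2) : ℝ) : ℂ) := by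
        push_cast
        ring
      rw [norm_div, e1, e2]
      constructor
      · rw [div_le_iff₀ hpos]
        refine (Real.norm_exp_I_mul_ofReal_sub_one_le).trans ?_
        rw [Real.norm_eq_abs, abs_mul]
      · rw [div_mul_cancel₀ _ hpos.ne']
        refine (norm_sub_le _ _).trans ?_
        rw [mul_comm, Complex.norm_exp_ofReal_mul_I]
        norm_num
  obtain ⟨ha, hb⟩ := h1
  have hq : 0 < 1 + q ^ 2 := by positivity
  rw [← div_eq_mul_inv, le_div_iff₀ hq]
  have h0 := norm_nonneg (phiK t p q)
  have h2 : 1 + q ^ 2 ≤ (1 + p ^ 2) + |p ^ 2 - q ^ 2| := by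
    linarith [neg_abs_le (p ^ 2 - q ^ 2)]
  have h3 := mul_le_mul_of_nonneg_left h2 h0
  have h4 := mul_le_mul_of_nonneg_right ha (by positivity : 0 ≤ 1 + p ^ 2)
  linarith

lemma phiK_measurable (t p : ℝ) : Measurable (phiK t p) := by
  unfold phiK
  refine Measurable.ite ?_ measurable_const (by fun_prop)
  exact measurableSet_eq_fun (by fun_prop) (by fun_prop)

/-- Base case `k = 1` of the induction in the proof of Theorem 3.1:
`∫ |φ_t(p,q)| · |(2π)^{-1/2} e^{-i(p-q)x₀} − W̃_ε(p−q)| dq → 0` as `ε → 0⁺`. -/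
theorem firstKernel_L1_tendsto (W : ℝ → ℝ) (hWc : Continuous W)
    (hWs : HasCompactSupport W) (hWnn : ∀ x, 0 ≤ W x) (hWint : (∫ x : ℝ, W x) = 1)
    (x₀ : ℝ) :
    ∀ t p : ℝ, Tendsto
      (fun ε : ℝ => ∫⁻ q : ℝ, (‖phiK t p q‖₊ : ENNReal) *
        (‖((Real.sqrt (2 * Real.pi) : ℝ) : ℂ)⁻¹ *
            Complex.exp (-Complex.I * (p - q) * x₀) - mollFT W x₀ ε (p - q)‖₊ : ENNReal))
      (𝓝[>] 0) (𝓝 0) := by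
  intro t p
  set c : ℂ := ((Real.sqrt (2 * Real.pi) : ℝ) : ℂ)⁻¹ with hc
  have hG := auxG_continuous W hWc hWs x₀
  set C : ℝ := |t| * (1 + p ^ 2) + 2 with hC
  let F : ℝ → ℝ → ENNReal := fun ε q => (‖phiK t p q‖₊ : ENNReal) *
    (‖c * auxG W x₀ (0, p - q) - c * auxG W x₀ (ε, p - q)‖₊ : ENNReal)
  have key : Tendsto (fun ε : ℝ => ∫⁻ q : ℝ, F ε q) (𝓝[>] 0) (𝓝 (∫⁻ _ : ℝ, (0 : ENNReal))) := by
    refine tendsto_lintegral_filter_of_dominated_convergence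
      (fun q => ENNReal.ofReal (C * (1 + q ^ 2)⁻¹ * (‖c‖ + ‖c‖))) ?_ ?_ ?_ ?_
    · refine Eventually.of_forall fun ε => ?_
      have h1 : Measurable fun q : ℝ => (‖phiK t p q‖₊ : ENNReal) :=
        (phiK_measurable t p).nnnorm.coe_nnreal_ennreal
      have h2 : Continuous fun q : ℝ =>
        c * auxG W x₀ (0, p - q) - c * auxG W x₀ (ε, p - q) := by fun_prop
      exact h1.mul h2.measurable.nnnorm.coe_nnreal_ennreal
    · refine Eventually.of_forall fun ε => Eventually.of_forall fun q => ?_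
      have hb : ∀ z, ‖c * auxG W x₀ z‖ ≤ ‖c‖ := fun z => by
        rw [norm_mul]
        exact mul_le_of_le_one_right (norm_nonneg _) (auxG_norm_le W hWnn hWint x₀ z)
      have hn : ‖phiK t p q‖ * ‖c * auxG W x₀ (0, p - q) - c * auxG W x₀ (ε, p - q)‖
          ≤ C * (1 + q ^ 2)⁻¹ * (‖c‖ + ‖c‖) := by
        refine mul_le_mul (phiK_bound t p q) ((norm_sub_le _ _).trans (add_le_add (hb _) (hb _)))
          (norm_nonneg _) ((norm_nonneg _).trans (phiK_bound t p q))
      have := ENNReal.ofReal_le_ofReal hn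
      rw [ENNReal.ofReal_mul (norm_nonneg _), ofReal_norm, ofReal_norm] at this
      exact this
    · have hi : Integrable fun q : ℝ => C * (1 + q ^ 2)⁻¹ * (‖c‖ + ‖c‖) :=
        (integrable_inv_one_add_sq.const_mul C).mul_const _
      exact hi.lintegral_lt_top.ne
    · refine Eventually.of_forall fun q => ?_
      have h2 : Continuous fun ε : ℝ =>
        ‖phiK t p q‖₊ * ‖c * auxG W x₀ (0, p - q) - c * auxG W x₀ (ε, p - q)‖₊ := by fun_prop
      have h3 := (ENNReal.continuous_coe.comp h2).tendsto 0
      simp only [Function.comp_def, sub_self, nnnorm_zero, mul_zero, ENNReal.coe_zero,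
        ENNReal.coe_mul] at h3
      exact h3.mono_left nhdsWithin_le_nhds
  rw [lintegral_zero] at key
  refine key.congr' ?_
  filter_upwards [self_mem_nhdsWithin] with ε hε
  refine lintegral_congr fun q => ?_
  simp only [F]
  rw [mollFT_eq W x₀ ε (p - q) hε, auxG_zero W hWint]
  push_cast
  rfl
end

section
/- Let α ∈ ℝ \ {0}, x₀ ∈ ℝ, and let W : ℝ → ℝ be continuous, compactly supported, nonnegative, with ∫_ℝ W(x) dx = 1. Set v_α(p) = α (2π)^{-1/2} e^{−ipx₀} and v_ε(p) = α · (2π)^{-1/2} ∫_ℝ ε⁻¹ W((x − x₀)/ε) e^{−ipx} dx for ε > 0. With K_{t,n}[·] the recursively defined Dyson kernels, for every n ≥ 1, every t ∈ ℝ and every p ∈ ℝ, the integrals ∫_ℝ |K_{t,n}[v_α](p,q) − K_{t,n}[v_ε](p,q)| dq converge to 0 as ε → 0⁺. -/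
open MeasureTheory Filter Topology

/-- The Dyson expansion kernels: `dysonKernel v n` is the `(n+1)`-st kernel `K_{·,n+1}[v]`. -/
noncomputable def dysonKernel (v : ℝ → ℂ) : ℕ → ℝ → ℝ → ℝ → ℂ
  | 0 => fun t p q => phiK t p q * v (p - q) / ((Real.sqrt (2 * Real.pi) : ℝ) : ℂ)
  | n + 1 => fun t p q =>
      ∫ s in (0 : ℝ)..t, ∫ z : ℝ,
        dysonKernel v n s p z * Complex.exp (Complex.I * s * ((z : ℂ) ^ 2 - (q : ℂ) ^ 2)) *
          v (z - q) / ((Real.sqrt (2 * Real.pi) : ℝ) : ℂ)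

/-- The Fourier transform of the delta potential `α δ(· − x₀)`. -/
noncomputable def deltaFT (α x₀ p : ℝ) : ℂ :=
  (α : ℂ) * ((Real.sqrt (2 * Real.pi) : ℝ) : ℂ)⁻¹ * Complex.exp (-Complex.I * p * x₀)

/-- `α` times the Fourier transform of the shifted mollifier `x ↦ W_ε(x − x₀)`. -/
noncomputable def mollPotFT (α : ℝ) (W : ℝ → ℝ) (x₀ ε p : ℝ) : ℂ :=
  (α : ℂ) * (((Real.sqrt (2 * Real.pi) : ℝ) : ℂ)⁻¹ *
    ∫ x : ℝ, ((ε⁻¹ * W ((x - x₀) / ε) : ℝ) : ℂ) * Complex.exp (-Complex.I * p * x))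


noncomputable def aK (x q : ℝ) : ℂ := 1 / (1 + Complex.I * ((x : ℂ) - (q : ℂ) ^ 2))

lemma aK_den_ne (x q : ℝ) : (1 + Complex.I * ((x : ℂ) - (q : ℂ) ^ 2)) ≠ 0 := by
  intro h
  have := congrArg Complex.re h
  simp [← Complex.ofReal_pow, ← Complex.ofReal_sub] at this

lemma aK_norm (x q : ℝ) : ‖aK x q‖ = (Real.sqrt (1 + (x - q ^ 2) ^ 2))⁻¹ := by
  unfold aK
  rw [norm_div, norm_one, one_div]
  congr 1
  have : (1 + Complex.I * ((x : ℂ) - (q : ℂ) ^ 2)) = ((1:ℝ) : ℂ) + ((x - q^2 : ℝ) : ℂ) * Complex.I := by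
    push_cast; ring
  rw [this, Complex.norm_add_mul_I]
  norm_num

lemma aK_norm_le_one (x q : ℝ) : ‖aK x q‖ ≤ 1 := by
  rw [aK_norm]
  apply inv_le_one_of_one_le₀
  rw [Real.one_le_sqrt]
  nlinarith [sq_nonneg (x - q^2)]

lemma aK_cont : Continuous (fun y : ℝ × ℝ => aK y.1 y.2) := by
  unfold aK
  refine Continuous.div (by fun_prop) (by fun_prop) (fun y => aK_den_ne _ _)

lemma aK_cont2 {X : Type*} [TopologicalSpace X] {f g : X → ℝ} (hf : Continuous f) (hg : Continuous g) :
    Continuous (fun y => aK (f y) (g y)) := by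
  unfold aK
  refine Continuous.div continuous_const ?_ (fun y => aK_den_ne _ _)
  fun_prop

lemma aK_bound (x q : ℝ) :
    ‖aK x q‖ ≤ 2 * ((1 + (q - Real.sqrt x) ^ 2)⁻¹ + (1 + (q + Real.sqrt x) ^ 2)⁻¹) := by
  rw [aK_norm]
  set y := Real.sqrt x with hy
  have hy0 : 0 ≤ y := Real.sqrt_nonneg x
  have key : ∀ r : ℝ, 0 ≤ r → (r - y) ^ 2 ≤ |x - r ^ 2| := by
    intro r hr
    rcases le_total 0 x with hx | hx
    · have hxy : x = y ^ 2 := (Real.sq_sqrt hx).symm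
      rw [hxy, show y ^ 2 - r ^ 2 = (y - r) * (y + r) by ring, abs_mul, abs_of_nonneg (by positivity : 0 ≤ y + r),
        ← sq_abs, abs_sub_comm, sq]
      apply mul_le_mul_of_nonneg_left _ (abs_nonneg _)
      rw [abs_le]; constructor <;> linarith
    · have : y = 0 := Real.sqrt_eq_zero_of_nonpos hx
      rw [this, abs_sub_comm]
      have := le_abs_self (r^2 - x)
      nlinarith
  have key2 : ∀ u : ℝ, u ^ 2 ≤ |x - q ^ 2| →
      (Real.sqrt (1 + (x - q ^ 2) ^ 2))⁻¹ ≤ 2 * (1 + u ^ 2)⁻¹ := by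
    intro u hu
    have h1 : (1 + u ^ 2) / 2 ≤ Real.sqrt (1 + (x - q ^ 2) ^ 2) := by
      apply Real.le_sqrt_of_sq_le
      rw [← sq_abs (x - q^2)]
      have h3 : (u^2)^2 ≤ |x - q^2|^2 := by gcongr
      nlinarith [sq_nonneg (u^2 - 1)]
    calc (Real.sqrt (1 + (x - q ^ 2) ^ 2))⁻¹ ≤ ((1 + u ^ 2) / 2)⁻¹ := by
          apply inv_anti₀ (by positivity) h1
      _ = 2 * (1 + u ^ 2)⁻¹ := by rw [inv_div]; ring
  have p1 : 0 ≤ (1 + (q - y) ^ 2)⁻¹ := by positivity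
  have p2 : 0 ≤ (1 + (q + y) ^ 2)⁻¹ := by positivity
  rcases le_total 0 q with hq | hq
  · have := key2 (q - y) (key q hq)
    linarith
  · have h := key (-q) (by linarith)
    have := key2 (q + y) (by
      calc (q + y)^2 = (-q - y)^2 := by ring
        _ ≤ |x - (-q)^2| := h
        _ = _ := by simp)
    linarith

lemma aK_integrable (x : ℝ) : Integrable (fun q => ‖aK x q‖) := by
  have hd : Integrable (fun q : ℝ => 2 * ((1 + (q - Real.sqrt x) ^ 2)⁻¹ + (1 + (q + Real.sqrt x) ^ 2)⁻¹)) :=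
    ((integrable_inv_one_add_sq.comp_sub_right _).add (integrable_inv_one_add_sq.comp_add_right _)).const_mul 2
  refine hd.mono' ?_ ?_
  · have := aK_cont.comp (Continuous.prodMk_right x)
    exact this.norm.aestronglyMeasurable
  · filter_upwards with q
    rw [norm_norm]; exact aK_bound x q

lemma aK_integral_le (x : ℝ) : ∫ q, ‖aK x q‖ ≤ 4 * Real.pi := by
  have h1 := (integrable_inv_one_add_sq.comp_sub_right (Real.sqrt x))
  have h2 := (integrable_inv_one_add_sq.comp_add_right (Real.sqrt x))
  calc ∫ q, ‖aK x q‖ ≤ ∫ q, 2 * ((1 + (q - Real.sqrt x) ^ 2)⁻¹ + (1 + (q + Real.sqrt x) ^ 2)⁻¹) :=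
        integral_mono (aK_integrable x) ((h1.add h2).const_mul 2) (fun q => aK_bound x q)
    _ = 4 * Real.pi := by
        rw [integral_const_mul, integral_add h1 h2,
          integral_sub_right_eq_self (fun q : ℝ => (1 + q ^ 2)⁻¹) (Real.sqrt x),
          integral_add_right_eq_self (fun q : ℝ => (1 + q ^ 2)⁻¹) (Real.sqrt x),
          integral_univ_inv_one_add_sq]
        ring

lemma japanese_aux (X Y D : ℝ) (hX : 1 ≤ X) (hY : 1 ≤ Y) (hD : 1 ≤ D) (h : D ≤ 4 * max X Y) :
    (Real.sqrt X)⁻¹ * (Real.sqrt Y)⁻¹ ≤ 4 * D ^ (-(3/8:ℝ)) * (X ^ (-(5/8:ℝ)) + Y ^ (-(5/8:ℝ))) := by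
  wlog hXY : X ≤ Y generalizing X Y
  · have := this Y X hY hX (by rwa [max_comm]) (le_of_not_ge hXY)
    rw [mul_comm, add_comm (X ^ _)]; exact this
  rw [max_eq_right hXY] at h
  have hX0 : 0 < X := by linarith
  have hY0 : 0 < Y := by linarith
  have hD0 : 0 < D := by linarith
  rw [Real.sqrt_eq_rpow, Real.sqrt_eq_rpow, ← Real.rpow_neg hX0.le, ← Real.rpow_neg hY0.le]
  have e1 : Y ^ (-(1/2:ℝ)) = Y ^ (-(3/8:ℝ)) * Y ^ (-(1/8:ℝ)) := by
    rw [← Real.rpow_add hY0]; norm_num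
  have e2 : Y ^ (-(1/8:ℝ)) ≤ X ^ (-(1/8:ℝ)) :=
    Real.rpow_le_rpow_of_nonpos hX0 hXY (by norm_num)
  have e3 : Y ^ (-(3/8:ℝ)) ≤ (D/4) ^ (-(3/8:ℝ)) :=
    Real.rpow_le_rpow_of_nonpos (by positivity) (by linarith) (by norm_num)
  have e4 : (D/4) ^ (-(3/8:ℝ)) ≤ 4 * D ^ (-(3/8:ℝ)) := by
    rw [Real.div_rpow hD0.le (by norm_num), Real.rpow_neg (by norm_num : (0:ℝ) ≤ 4), div_inv_eq_mul, mul_comm]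
    gcongr
    calc (4:ℝ)^(3/8:ℝ) ≤ 4 ^ (1:ℝ) := Real.rpow_le_rpow_of_exponent_le (by norm_num) (by norm_num)
      _ = 4 := by simp
  have e5 : X ^ (-(1/2:ℝ)) * X ^ (-(1/8:ℝ)) = X ^ (-(5/8:ℝ)) := by
    rw [← Real.rpow_add hX0]; norm_num
  have n1 : 0 ≤ Y ^ (-(5/8:ℝ)) := by positivity
  calc X ^ (-(1/2:ℝ)) * Y ^ (-(1/2:ℝ)) ≤ X ^ (-(1/2:ℝ)) * ((4 * D ^ (-(3/8:ℝ))) * X ^ (-(1/8:ℝ))) := by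
        rw [e1]; gcongr; exact e3.trans e4
    _ = 4 * D ^ (-(3/8:ℝ)) * X ^ (-(5/8:ℝ)) := by rw [← e5]; ring
    _ ≤ _ := by gcongr; linarith

lemma aK_prod_bound (p q x : ℝ) : ‖aK x p‖ * ‖aK x q‖ ≤
    4 * (1 + (p^2 - q^2)^2) ^ (-(3/8:ℝ)) * ((1 + (x - p^2)^2) ^ (-(5/8:ℝ)) + (1 + (x - q^2)^2) ^ (-(5/8:ℝ))) := by
  rw [aK_norm, aK_norm]
  apply japanese_aux
  · nlinarith [sq_nonneg (x - p^2)]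
  · nlinarith [sq_nonneg (x - q^2)]
  · nlinarith [sq_nonneg (p^2 - q^2)]
  · rcases le_total ((x-p^2)^2) ((x-q^2)^2) with h | h
    · have := le_max_right (1 + (x - p^2)^2) (1 + (x - q^2)^2)
      nlinarith [sq_nonneg ((x-p^2) + (x-q^2))]
    · have := le_max_left (1 + (x - p^2)^2) (1 + (x - q^2)^2)
      nlinarith [sq_nonneg ((x-p^2) + (x-q^2))]

lemma jap_int : Integrable (fun u : ℝ => (1 + u ^ 2) ^ (-(5/8:ℝ))) := by
  have := integrable_rpow_neg_one_add_norm_sq (E := ℝ) (μ := volume) (r := 5/4) (by simp; norm_num)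
  convert this using 3
  · simp
  · norm_num

lemma jap_int2 (p : ℝ) : Integrable (fun q : ℝ => (1 + (p^2 - q^2) ^ 2) ^ (-(3/8:ℝ))) := by
  have h := integrable_rpow_neg_one_add_norm_sq (E := ℝ) (μ := volume) (r := 3/2) (by simp; norm_num)
  refine (h.const_mul ((2 * (1 + p^2)^2) ^ (3/8:ℝ))).mono' ?_ ?_
  · refine Continuous.aestronglyMeasurable ?_
    exact Continuous.rpow_const (by fun_prop) (fun q => Or.inl (by positivity))
  · filter_upwards with q
    rw [Real.norm_of_nonneg (by positivity)]
    have h1 : (1 + ‖q‖^2)^2 / (2 * (1+p^2)^2) ≤ 1 + (p^2-q^2)^2 := by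
      rw [div_le_iff₀ (by positivity), Real.norm_eq_abs, sq_abs]
      nlinarith [sq_nonneg ((1 + p^2) + (p^2 - q^2)), sq_nonneg (p^2 - q^2), mul_nonneg (sq_nonneg p) (sq_nonneg (p^2-q^2)), mul_nonneg (sq_nonneg (p^2)) (sq_nonneg (p^2-q^2))]
    have h2 : (1 + (p^2-q^2)^2) ^ (-(3/8:ℝ)) ≤ ((1 + ‖q‖^2)^2 / (2 * (1+p^2)^2)) ^ (-(3/8:ℝ)) :=
      Real.rpow_le_rpow_of_nonpos (by positivity) h1 (by norm_num)
    refine h2.trans (le_of_eq ?_)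
    rw [Real.div_rpow (by positivity) (by positivity), Real.rpow_neg (by positivity : 0 ≤ 2 * (1+p^2)^2),
      div_inv_eq_mul, mul_comm, ← Real.rpow_natCast (1 + ‖q‖^2), ← Real.rpow_mul (by positivity)]
    norm_num

lemma aK_prod_integrable (p : ℝ) :
    Integrable (fun y : ℝ × ℝ => ‖aK y.2 p‖ * ‖aK y.2 y.1‖) (volume.prod volume) := by
  have hg := jap_int2 p
  have hh := jap_int
  have hd1 : Integrable (fun y : ℝ × ℝ => (1 + (p^2 - y.1^2) ^ 2) ^ (-(3/8:ℝ)) * (1 + (y.2 - p^2)^2) ^ (-(5/8:ℝ)))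
      (volume.prod volume) := hg.mul_prod (hh.comp_sub_right (p^2))
  have hd2 : Integrable (fun y : ℝ × ℝ => (1 + (p^2 - y.1^2) ^ 2) ^ (-(3/8:ℝ)) * (1 + (y.2 - y.1^2)^2) ^ (-(5/8:ℝ)))
      (volume.prod volume) := by
    rw [integrable_prod_iff]
    · constructor
      · filter_upwards with q
        exact (hh.comp_sub_right (q^2)).const_mul _
      · have : ∀ q : ℝ, ∫ x : ℝ, ‖(1 + (p^2 - q^2) ^ 2) ^ (-(3/8:ℝ)) * (1 + (x - q^2)^2) ^ (-(5/8:ℝ))‖ =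
          (1 + (p^2 - q^2) ^ 2) ^ (-(3/8:ℝ)) * ∫ x : ℝ, (1 + x^2) ^ (-(5/8:ℝ)) := by
          intro q
          rw [← integral_sub_right_eq_self (fun x : ℝ => (1 + x^2) ^ (-(5/8:ℝ))) (q^2), ← integral_const_mul]
          congr 1; ext x
          rw [Real.norm_of_nonneg (by positivity)]
        simp only [this]
        exact hg.mul_const _
    · refine Continuous.aestronglyMeasurable ?_
      refine Continuous.mul ?_ ?_
      · exact Continuous.rpow_const (by fun_prop) (fun q => Or.inl (by positivity))
      · exact Continuous.rpow_const (by fun_prop) (fun q => Or.inl (by positivity))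
  refine ((hd1.add hd2).const_mul 4).mono' ?_ ?_
  · refine Continuous.aestronglyMeasurable ?_
    have c1 : Continuous (fun y : ℝ × ℝ => aK y.2 p) := aK_cont2 (by fun_prop) (by fun_prop)
    have c2 : Continuous (fun y : ℝ × ℝ => aK y.2 y.1) := aK_cont2 (by fun_prop) (by fun_prop)
    exact c1.norm.mul c2.norm
  · filter_upwards with y
    rw [Real.norm_of_nonneg (by positivity)]
    refine (aK_prod_bound p y.1 y.2).trans (le_of_eq ?_)
    simp only [Pi.add_apply]
    ring

lemma aK_prod_integrable_x (p q : ℝ) : Integrable (fun x : ℝ => ‖aK x p‖ * ‖aK x q‖) := by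
  have hd := (((jap_int.comp_sub_right (p^2)).add (jap_int.comp_sub_right (q^2))).const_mul
    (4 * (1 + (p^2 - q^2)^2) ^ (-(3/8:ℝ))))
  refine hd.mono' ?_ ?_
  · refine Continuous.aestronglyMeasurable ?_
    have c1 : Continuous (fun y : ℝ => aK y p) := aK_cont2 (by fun_prop) (by fun_prop)
    have c2 : Continuous (fun y : ℝ => aK y q) := aK_cont2 (by fun_prop) (by fun_prop)
    exact c1.norm.mul c2.norm
  · filter_upwards with x
    rw [Real.norm_of_nonneg (by positivity)]
    exact aK_prod_bound p q x

open scoped FourierTransform in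
lemma base_repr (p q : ℝ) (hpq : p ^ 2 ≠ q ^ 2) (t : ℝ) :
    ∫ x : ℝ, Complex.exp ((1 + Complex.I * x) * t) * (aK x p * aK x q) =
      if 0 ≤ t then 2 * Real.pi * (Complex.exp (Complex.I * t * (q:ℂ)^2) * phiK t p q) else 0 := by
  set d : ℂ := Complex.I * ((p:ℂ)^2 - (q:ℂ)^2) with hd
  have hd0 : d ≠ 0 := by
    refine mul_ne_zero Complex.I_ne_zero ?_
    rw [sub_ne_zero]; exact_mod_cast hpq
  let F : ℝ → ℂ := fun t => (Complex.exp ((-1 + Complex.I * (p:ℂ)^2) * t) -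
    Complex.exp ((-1 + Complex.I * (q:ℂ)^2) * t)) / d
  let f : ℝ → ℂ := fun t => if 0 ≤ t then F t else 0
  have hFc : Continuous F := by
    refine Continuous.div_const ?_ _
    fun_prop
  have hf : Continuous f := by
    refine Continuous.if_le hFc continuous_const continuous_const continuous_id ?_
    intro x hx
    simp [F, ← hx]
  have re1 : ∀ r : ℝ, (-1 + Complex.I * (r:ℂ)^2).re < 0 := by
    intro r
    simp [← Complex.ofReal_pow]
  have hFi : IntegrableOn F (Set.Ioi 0) := by
    refine Integrable.div_const ?_ _
    exact (integrableOn_exp_mul_complex_Ioi (re1 p) 0).sub (integrableOn_exp_mul_complex_Ioi (re1 q) 0)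
  have hfind : ∀ᵐ s : ℝ, f s = (Set.Ioi (0:ℝ)).indicator F s := by
    have : ∀ᵐ s : ℝ, s ≠ 0 := by simp [ae_iff]
    filter_upwards [this] with s hs
    by_cases h : 0 ≤ s
    · have : 0 < s := lt_of_le_of_ne h (Ne.symm hs)
      simp [f, h, this]
    · simp [f, h, not_lt.mpr (not_le.mp h).le]
  have hfi : Integrable f := by
    refine Integrable.congr (hFi.integrable_indicator measurableSet_Ioi) ?_
    filter_upwards [hfind] with s hs using hs.symm
  have hF : ∀ ξ : ℝ, 𝓕 f ξ = aK (2 * Real.pi * ξ) p * aK (2 * Real.pi * ξ) q := by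
    intro ξ
    rw [Real.fourier_real_eq_integral_exp_smul]
    set x := 2 * Real.pi * ξ with hx
    have e1 : ∫ v : ℝ, Complex.exp (↑(-2 * Real.pi * v * ξ) * Complex.I) • f v =
        ∫ v : ℝ in Set.Ioi 0, (Complex.exp ((-(1 + Complex.I * ((x:ℂ) - (p:ℂ)^2))) * v) -
          Complex.exp ((-(1 + Complex.I * ((x:ℂ) - (q:ℂ)^2))) * v)) / d := by
      rw [← integral_indicator measurableSet_Ioi]
      apply integral_congr_ae
      filter_upwards [hfind] with v hv
      rw [hv]
      by_cases h : v ∈ Set.Ioi (0:ℝ)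
      · simp only [Set.indicator_of_mem h, F, smul_eq_mul]
        rw [mul_div_assoc', mul_sub, ← Complex.exp_add, ← Complex.exp_add]
        rw [hx]; push_cast
        congr 3 <;> ring
      · simp only [Set.indicator_of_notMem h, smul_zero]
    have re2 : ∀ r : ℝ, (-(1 + Complex.I * ((x:ℂ) - (r:ℂ)^2))).re < 0 := by
      intro r
      simp [← Complex.ofReal_pow, ← Complex.ofReal_sub]
    rw [e1, integral_div, integral_sub (integrableOn_exp_mul_complex_Ioi (re2 p) 0)
      (integrableOn_exp_mul_complex_Ioi (re2 q) 0), integral_exp_mul_complex_Ioi (re2 p),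
      integral_exp_mul_complex_Ioi (re2 q)]
    have n1 := aK_den_ne x p
    have n2 := aK_den_ne x q
    simp only [Complex.ofReal_zero, mul_zero, Complex.exp_zero, aK, neg_div_neg_eq]
    rw [div_sub_div _ _ n1 n2, div_div, div_mul_div_comm, div_eq_div_iff (by positivity) (by positivity), hd]
    ring
  have hint : Integrable (fun x : ℝ => aK x p * aK x q) := by
    refine (aK_prod_integrable_x p q).mono' ?_ ?_
    · exact ((aK_cont2 continuous_id continuous_const).mul (aK_cont2 continuous_id continuous_const)).aestronglyMeasurable
    · filter_upwards with x
      rw [norm_mul]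
  have hFint : Integrable (𝓕 f) := by
    have : 𝓕 f = fun ξ => (fun x : ℝ => aK x p * aK x q) (2 * Real.pi * ξ) := by
      ext ξ; exact hF ξ
    rw [this]
    exact hint.comp_mul_left' (by positivity)
  have inv := congrFun (Continuous.fourierInv_fourier_eq hf hfi hFint) t
  rw [Real.fourierInv_eq'] at inv
  have e2 : ∫ v : ℝ, Complex.exp (↑(2 * Real.pi * inner ℝ v t) * Complex.I) • 𝓕 f v =
      ∫ v : ℝ, (fun x : ℝ => Complex.exp (Complex.I * x * t) * (aK x p * aK x q)) (2 * Real.pi * v) := by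
    congr 1; ext v
    rw [hF]
    simp only [smul_eq_mul]
    congr 2
    simp
    ring
  rw [e2, Measure.integral_comp_mul_left (fun x : ℝ => Complex.exp (Complex.I * x * t) * (aK x p * aK x q)) (2 * Real.pi)] at inv
  have e3 : ∫ x : ℝ, Complex.exp ((1 + Complex.I * x) * t) * (aK x p * aK x q) =
      Complex.exp t * ∫ x : ℝ, Complex.exp (Complex.I * x * t) * (aK x p * aK x q) := by
    rw [← integral_const_mul]
    congr 1; ext x
    rw [← mul_assoc (Complex.exp t), ← Complex.exp_add]
    congr 2; ring
  have hpi : (Real.pi : ℂ) ≠ 0 := by exact_mod_cast Real.pi_ne_zero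
  have e4 : ∫ x : ℝ, Complex.exp (Complex.I * x * t) * (aK x p * aK x q) = 2 * Real.pi * f t := by
    rw [← inv, abs_of_pos (by positivity), Complex.real_smul]
    push_cast
    rw [← mul_assoc, mul_inv_cancel₀ (mul_ne_zero two_ne_zero hpi), one_mul]
  rw [e3, e4]
  by_cases h : 0 ≤ t
  · simp only [f, if_pos h, F, phiK, if_neg hpq]
    rw [← hd]
    have : Complex.exp t * (Complex.exp ((-1 + Complex.I * (p:ℂ)^2) * t) - Complex.exp ((-1 + Complex.I * (q:ℂ)^2) * t))
      = Complex.exp (Complex.I * t * (q:ℂ)^2) * (Complex.exp (Complex.I * t * ((p : ℂ) ^ 2 - (q : ℂ) ^ 2)) - 1) := by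
      rw [mul_sub, mul_sub, ← Complex.exp_add, ← Complex.exp_add, ← Complex.exp_add, mul_one]
      congr 2 <;> ring
    calc _ = 2 * Real.pi * ((Complex.exp t * (Complex.exp ((-1 + Complex.I * (p:ℂ)^2) * t) - Complex.exp ((-1 + Complex.I * (q:ℂ)^2) * t))) / d) := by ring
      _ = _ := by rw [this]; ring
  · simp [f, h]

noncomputable def mK (V : ℝ → ℂ) : ℕ → ℝ → ℝ → ℝ → ℂ
  | 0 => fun x p q => aK x p * aK x q * V (p - q)
  | n + 1 => fun x p q => (∫ z : ℝ, mK V n x p z * V (z - q)) * aK x q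

lemma mK_meas (V : ℝ → ℂ) (hV : Measurable V) (p : ℝ) : ∀ n,
    StronglyMeasurable (fun y : ℝ × ℝ => mK V n y.2 p y.1) := by
  intro n
  have hc : Continuous (fun y : ℝ × ℝ => aK y.2 y.1) := aK_cont2 continuous_snd continuous_fst
  have hc2 : Continuous (fun y : ℝ × ℝ => aK y.2 p) := aK_cont2 continuous_snd continuous_const
  induction n with
  | zero =>
    refine ((hc2.mul hc).stronglyMeasurable).mul ?_
    exact (hV.comp (measurable_const.sub measurable_fst)).stronglyMeasurable
  | succ n ih =>
    refine StronglyMeasurable.mul ?_ hc.stronglyMeasurable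
    have : StronglyMeasurable (fun w : (ℝ × ℝ) × ℝ => mK V n w.1.2 p w.2 * V (w.2 - w.1.1)) := by
      refine StronglyMeasurable.mul ?_ ?_
      · exact ih.comp_measurable (g := fun w : (ℝ × ℝ) × ℝ => (w.2, w.1.2)) (by fun_prop)
      · exact (hV.comp (by fun_prop)).stronglyMeasurable
    exact this.integral_prod_right

lemma mK_bound (V : ℝ → ℂ) (C : ℝ) (hC : ∀ y, ‖V y‖ ≤ C) (p : ℝ) : ∀ n x q,
    ‖mK V n x p q‖ ≤ C * (C * (4 * Real.pi)) ^ n * (‖aK x p‖ * ‖aK x q‖) := by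
  have hC0 : 0 ≤ C := (norm_nonneg _).trans (hC 0)
  intro n
  induction n with
  | zero =>
    intro x q
    simp only [mK, norm_mul, pow_zero, mul_one]
    rw [mul_comm]
    gcongr
    exact hC _
  | succ n ih =>
    intro x q
    simp only [mK, norm_mul]
    have h1 : ‖∫ z : ℝ, mK V n x p z * V (z - q)‖ ≤
        ∫ z : ℝ, (C * (C * (4 * Real.pi)) ^ n * ‖aK x p‖ * C) * ‖aK x z‖ := by
      apply norm_integral_le_of_norm_le ((aK_integrable x).const_mul _)
      filter_upwards with z
      rw [norm_mul]
      calc _ ≤ (C * (C * (4 * Real.pi)) ^ n * (‖aK x p‖ * ‖aK x z‖)) * C := by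
            gcongr
            · exact ih x z
            · exact hC _
        _ = _ := by ring
    rw [integral_const_mul] at h1
    have h2 := aK_integral_le x
    calc _ ≤ ((C * (C * (4 * Real.pi)) ^ n * ‖aK x p‖ * C) * (4 * Real.pi)) * ‖aK x q‖ := by
          gcongr
          exact h1.trans (by gcongr)
      _ = _ := by ring

lemma mK_integrable_prod (V : ℝ → ℂ) (hV : Measurable V) (C : ℝ) (hC : ∀ y, ‖V y‖ ≤ C) (p : ℝ) (n : ℕ) :
    Integrable (fun y : ℝ × ℝ => mK V n y.2 p y.1) (volume.prod volume) := by
  refine ((aK_prod_integrable p).const_mul (C * (C * (4 * Real.pi)) ^ n)).mono'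
    (mK_meas V hV p n).aestronglyMeasurable ?_
  filter_upwards with y
  exact mK_bound V C hC p n y.2 y.1

lemma norm_exp_w (x t : ℝ) : ‖Complex.exp ((1 + Complex.I * x) * t)‖ = Real.exp t := by
  rw [Complex.norm_exp]; simp

lemma mK_tendsto {ι : Type*} {l : Filter ι} [l.IsCountablyGenerated] (V : ℝ → ℂ) (U : ι → ℝ → ℂ) (C : ℝ)
    (hU : ∀ᶠ i in l, Measurable (U i) ∧ ∀ y, ‖U i y‖ ≤ C)
    (hlim : ∀ y, Tendsto (fun i => U i y) l (𝓝 (V y))) (p : ℝ) : ∀ n x q,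
    Tendsto (fun i => mK (U i) n x p q) l (𝓝 (mK V n x p q)) := by
  intro n
  induction n with
  | zero => intro x q; exact (hlim _).const_mul _
  | succ n ih =>
    intro x q
    refine Tendsto.mul_const _ ?_
    refine tendsto_integral_filter_of_dominated_convergence
      (fun z => (C * (C * (4 * Real.pi)) ^ n * ‖aK x p‖ * C) * ‖aK x z‖) ?_ ?_
      ((aK_integrable x).const_mul _) ?_
    · filter_upwards [hU] with i hi
      refine AEStronglyMeasurable.mul ?_ ?_
      · exact ((mK_meas (U i) hi.1 p n).comp_measurable (g := fun z : ℝ => (z, x)) (by fun_prop)).aestronglyMeasurable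
      · exact (hi.1.comp (by fun_prop)).aestronglyMeasurable
    · filter_upwards [hU] with i hi
      filter_upwards with z
      have hC0 : 0 ≤ C := (norm_nonneg _).trans (hi.2 0)
      rw [norm_mul]
      calc _ ≤ (C * (C * (4 * Real.pi)) ^ n * (‖aK x p‖ * ‖aK x z‖)) * C := by
            gcongr
            · exact mK_bound _ C hi.2 p n x z
            · exact hi.2 _
        _ = _ := by ring
    · filter_upwards with z
      exact (ih x z).mul (hlim _)

lemma exp_aK (x q t : ℝ) : Complex.exp ((1 + Complex.I * x) * t) * aK x q =
    Complex.exp (Complex.I * t * (q:ℂ)^2) *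
      ∫ s : ℝ in Set.Iic t, Complex.exp (-(Complex.I * s * (q:ℂ)^2)) * Complex.exp ((1 + Complex.I * x) * s) := by
  have re : 0 < (1 + Complex.I * ((x:ℂ) - (q:ℂ)^2)).re := by
    simp [← Complex.ofReal_pow, ← Complex.ofReal_sub]
  have : ∀ s : ℝ, Complex.exp (-(Complex.I * s * (q:ℂ)^2)) * Complex.exp ((1 + Complex.I * x) * s) =
      Complex.exp ((1 + Complex.I * ((x:ℂ) - (q:ℂ)^2)) * s) := by
    intro s; rw [← Complex.exp_add]; congr 1; ring
  simp only [this]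
  rw [integral_exp_mul_complex_Iic re, aK, mul_div_assoc', mul_div_assoc', mul_one, ← Complex.exp_add]
  congr 2; ring

lemma dyson_repr (v : ℝ → ℂ) (hv : Measurable v) (C : ℝ)
    (V : ℝ → ℂ) (hVdef : V = fun y => v y / ((Real.sqrt (2 * Real.pi) : ℝ) : ℂ))
    (hC : ∀ y, ‖V y‖ ≤ C) (p : ℝ) : ∀ n : ℕ, ∀ᵐ q : ℝ, ∀ t : ℝ,
    ∫ x : ℝ, Complex.exp ((1 + Complex.I * x) * t) * mK V n x p q =
      if 0 ≤ t then 2 * Real.pi * (Complex.exp (Complex.I * t * (q:ℂ)^2) * dysonKernel v n t p q) else 0 := by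
  have hV : Measurable V := by rw [hVdef]; exact hv.div_const _
  intro n
  induction n with
  | zero =>
    have h1 : ∀ᵐ q : ℝ, q ≠ p := by simp [ae_iff]
    have h2 : ∀ᵐ q : ℝ, q ≠ -p := by simp [ae_iff]
    filter_upwards [h1, h2] with q hq1 hq2 t
    have hpq : p ^ 2 ≠ q ^ 2 := by
      intro h
      rcases sq_eq_sq_iff_eq_or_eq_neg.mp h with h | h
      · exact hq1 h.symm
      · exact hq2 (by linarith)
    have := base_repr p q hpq t
    simp only [mK, dysonKernel]
    simp only [← mul_assoc] at this ⊢
    rw [integral_mul_const, this, hVdef]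
    split_ifs
    · ring
    · simp
  | succ n ih =>
    filter_upwards with q t
    set N : ℝ → ℂ := fun x => ∫ z : ℝ, mK V n x p z * V (z - q) with hN
    have hNp : Integrable (fun y : ℝ × ℝ => mK V n y.2 p y.1 * V (y.1 - q)) (volume.prod volume) := by
      refine (mK_integrable_prod V hV C hC p n).mul_bdd (c := C) ?_ ?_
      · exact (hV.comp (by fun_prop)).aestronglyMeasurable
      · filter_upwards with y using hC _
    have hNi : Integrable N := hNp.integral_prod_right
    -- G
    have hG : ∀ s : ℝ, ∫ x : ℝ, Complex.exp ((1 + Complex.I * x) * s) * N x =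
        if 0 ≤ s then 2 * Real.pi * ∫ z : ℝ, Complex.exp (Complex.I * s * (z:ℂ)^2) * dysonKernel v n s p z * V (z - q)
          else 0 := by
      intro s
      have a1 : ∫ x : ℝ, Complex.exp ((1 + Complex.I * x) * s) * N x =
          ∫ x : ℝ, ∫ z : ℝ, Complex.exp ((1 + Complex.I * x) * s) * (mK V n x p z * V (z - q)) := by
        congr 1; ext x; rw [hN, integral_const_mul]
      have hI : Integrable (fun y : ℝ × ℝ => Complex.exp ((1 + Complex.I * y.2) * s) * (mK V n y.2 p y.1 * V (y.1 - q)))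
          (volume.prod volume) := by
        refine hNp.bdd_mul (c := Real.exp s) ?_ ?_
        · refine Continuous.aestronglyMeasurable ?_
          fun_prop
        · filter_upwards with y using (norm_exp_w _ _).le
      have hI2 : Integrable (Function.uncurry fun x z : ℝ => Complex.exp ((1 + Complex.I * x) * s) * (mK V n x p z * V (z - q)))
          (volume.prod volume) := hI.swap
      rw [a1, integral_integral_swap hI2]
      have a2 : ∫ z : ℝ, ∫ x : ℝ, Complex.exp ((1 + Complex.I * x) * s) * (mK V n x p z * V (z - q)) =
          ∫ z : ℝ, if 0 ≤ s then 2 * Real.pi * (Complex.exp (Complex.I * s * (z:ℂ)^2) * dysonKernel v n s p z * V (z - q)) else 0 := by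
        apply integral_congr_ae
        filter_upwards [ih] with z hz
        simp only [← mul_assoc]
        rw [integral_mul_const, hz s]
        split_ifs
        · ring
        · simp
      rw [a2]
      split_ifs
      · rw [integral_const_mul]
      · simp
    have b1 : ∫ x : ℝ, Complex.exp ((1 + Complex.I * x) * t) * mK V (n+1) x p q =
        Complex.exp (Complex.I * t * (q:ℂ)^2) * ∫ x : ℝ, ∫ s : ℝ in Set.Iic t,
          Complex.exp (-(Complex.I * s * (q:ℂ)^2)) * (Complex.exp ((1 + Complex.I * x) * s) * N x) := by
      rw [← integral_const_mul]
      congr 1; ext x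
      simp only [mK]
      calc _ = (Complex.exp ((1 + Complex.I * x) * t) * aK x q) * N x := by rw [hN]; ring
        _ = _ := by
          rw [exp_aK, mul_assoc, ← integral_mul_const]
          simp only [mul_assoc]
    have hJ : Integrable (fun y : ℝ × ℝ => Complex.exp (-(Complex.I * y.2 * (q:ℂ)^2)) *
        (Complex.exp ((1 + Complex.I * y.1) * y.2) * N y.1)) (volume.prod (volume.restrict (Set.Iic t))) := by
      have hexp : Integrable (fun s : ℝ => Real.exp s) (volume.restrict (Set.Iic t)) := integrableOn_exp_Iic t
      have := hNi.norm.mul_prod hexp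
      refine this.mono' ?_ ?_
      · refine AEStronglyMeasurable.mul ?_ (AEStronglyMeasurable.mul ?_ ?_)
        · refine Continuous.aestronglyMeasurable ?_
          fun_prop
        · refine Continuous.aestronglyMeasurable ?_
          fun_prop
        · exact hNi.aestronglyMeasurable.comp_fst
      · filter_upwards with y
        rw [norm_mul, norm_mul, norm_exp_w]
        have : ‖Complex.exp (-(Complex.I * y.2 * (q:ℂ)^2))‖ = 1 := by
          rw [Complex.norm_exp]; simp [← Complex.ofReal_pow]
        rw [this, one_mul, mul_comm]
    rw [b1, integral_integral_swap hJ]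
    have b2 : ∫ s : ℝ in Set.Iic t, ∫ x : ℝ, Complex.exp (-(Complex.I * s * (q:ℂ)^2)) * (Complex.exp ((1 + Complex.I * x) * s) * N x)
       = ∫ s : ℝ in Set.Iic t, (Set.Ici (0:ℝ)).indicator (fun s : ℝ => 2 * Real.pi * ∫ z : ℝ,
        dysonKernel v n s p z * Complex.exp (Complex.I * s * ((z : ℂ) ^ 2 - (q : ℂ) ^ 2)) *
          v (z - q) / ((Real.sqrt (2 * Real.pi) : ℝ) : ℂ)) s := by
      congr 1; ext s
      rw [integral_const_mul, hG s]
      by_cases h : 0 ≤ s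
      · rw [if_pos h, Set.indicator_of_mem (by exact h), mul_left_comm, ← integral_const_mul]
        congr 2; ext z
        have : Complex.exp (Complex.I * s * ((z : ℂ) ^ 2 - (q : ℂ) ^ 2)) =
          Complex.exp (-(Complex.I * s * (q:ℂ)^2)) * Complex.exp (Complex.I * s * (z:ℂ)^2) := by
          rw [← Complex.exp_add]; congr 1; ring
        rw [this, hVdef]; ring
      · rw [if_neg h, Set.indicator_of_notMem (by exact h), mul_zero]
    rw [b2, setIntegral_indicator measurableSet_Ici]
    split_ifs with ht
    · have : Set.Iic t ∩ Set.Ici 0 = Set.Icc 0 t := by ext; simp [and_comm]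
      rw [this, integral_Icc_eq_integral_Ioc, ← intervalIntegral.integral_of_le ht,
        intervalIntegral.integral_const_mul]
      simp only [dysonKernel]
      ring
    · have : Set.Iic t ∩ Set.Ici 0 = ∅ := by
        ext s; simp; intro h; linarith
      rw [this]; simp

lemma L1_nonneg {ι : Type*} {l : Filter ι} [l.IsCountablyGenerated] (v : ℝ → ℂ) (u : ι → ℝ → ℂ) (C : ℝ)
    (hv : Measurable v) (hvC : ∀ y, ‖v y‖ ≤ C)
    (hU : ∀ᶠ i in l, Measurable (u i) ∧ ∀ y, ‖u i y‖ ≤ C)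
    (hlim : ∀ y, Tendsto (fun i => u i y) l (𝓝 (v y))) (n : ℕ) (t p : ℝ) (ht : 0 ≤ t) :
    Tendsto (fun i => ∫⁻ q : ℝ, (‖dysonKernel v n t p q - dysonKernel (u i) n t p q‖₊ : ENNReal))
      l (𝓝 0) := by
  set c : ℂ := ((Real.sqrt (2 * Real.pi) : ℝ) : ℂ) with hc
  set V : ℝ → ℂ := fun y => v y / c with hVdef
  set U : ι → ℝ → ℂ := fun i y => u i y / c with hUdef
  set D : ℝ := C / ‖c‖ with hD
  have hVm : Measurable V := hv.div_const _
  have hVC : ∀ y, ‖V y‖ ≤ D := fun y => by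
    simp only [hVdef, norm_div, hD]; gcongr; exact hvC y
  have hUm : ∀ᶠ i in l, Measurable (U i) ∧ ∀ y, ‖U i y‖ ≤ D := by
    filter_upwards [hU] with i hi
    refine ⟨hi.1.div_const _, fun y => ?_⟩
    simp only [hUdef, norm_div, hD]; gcongr; exact hi.2 y
  have hUlim : ∀ y, Tendsto (fun i => U i y) l (𝓝 (V y)) := fun y => (hlim y).div_const _
  have hM := mK_tendsto V U D hUm hUlim p n
  set B : ℝ × ℝ → ℝ := fun y => 2 * (D * (D * (4 * Real.pi)) ^ n * (‖aK y.2 p‖ * ‖aK y.2 y.1‖)) with hB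
  have hBi : Integrable B (volume.prod volume) := ((aK_prod_integrable p).const_mul _).const_mul 2
  have key : Tendsto (fun i => ∫⁻ y : ℝ × ℝ, ENNReal.ofReal (Real.exp t) *
      ‖mK V n y.2 p y.1 - mK (U i) n y.2 p y.1‖ₑ ∂(volume.prod volume)) l (𝓝 0) := by
    have h0 : (0 : ENNReal) = ∫⁻ y : ℝ × ℝ, 0 ∂(volume.prod volume) := by simp
    rw [h0]
    refine tendsto_lintegral_filter_of_dominated_convergence
      (fun y => ENNReal.ofReal (Real.exp t) * ‖B y‖ₑ) ?_ ?_ ?_ ?_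
    · filter_upwards [hUm] with i hi
      refine Measurable.const_mul ?_ _
      exact ((mK_meas V hVm p n).sub (mK_meas (U i) hi.1 p n)).enorm
    · filter_upwards [hUm] with i hi
      filter_upwards with y
      gcongr
      rw [enorm_le_iff_norm_le]
      refine (norm_sub_le _ _).trans ?_
      have h1 := mK_bound V D hVC p n y.2 y.1
      have h2 := mK_bound (U i) D hi.2 p n y.2 y.1
      refine le_trans ?_ (Real.le_norm_self _)
      simp only [hB]; linarith
    · rw [lintegral_const_mul' _ _ ENNReal.ofReal_ne_top]
      exact ENNReal.mul_ne_top ENNReal.ofReal_ne_top hBi.2.ne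
    · filter_upwards with y
      have h1 : Tendsto (fun i => ‖mK V n y.2 p y.1 - mK (U i) n y.2 p y.1‖ₑ) l (𝓝 0) := by
        have := ((tendsto_const_nhds (x := mK V n y.2 p y.1)).sub (hM y.2 y.1)).enorm
        simpa using this
      have := ENNReal.Tendsto.const_mul (a := ENNReal.ofReal (Real.exp t)) h1 (Or.inr ENNReal.ofReal_ne_top)
      simpa using this
  refine tendsto_of_tendsto_of_tendsto_of_le_of_le' tendsto_const_nhds key (Eventually.of_forall fun i => bot_le) ?_
  filter_upwards [hU, hUm] with i hi hi'
  have r1 := dyson_repr v hv D V hVdef hVC p n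
  have r2 := dyson_repr (u i) hi.1 D (U i) rfl hi'.2 p n
  have i1 := mK_integrable_prod V hVm D hVC p n
  have i2 := mK_integrable_prod (U i) hi'.1 D hi'.2 p n
  rw [lintegral_prod _ (by
    refine (Measurable.const_mul ?_ _).aemeasurable
    exact ((mK_meas V hVm p n).sub (mK_meas (U i) hi'.1 p n)).enorm)]
  refine lintegral_mono_ae ?_
  filter_upwards [r1, r2, i1.prod_right_ae, i2.prod_right_ae] with q h1 h2 j1 j2
  specialize h1 t
  specialize h2 t
  rw [if_pos ht] at h1 h2
  have bnd : ∀ m : ℝ → ℂ, Integrable m → Integrable (fun x : ℝ => Complex.exp ((1 + Complex.I * x) * t) * m x) := by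
    intro m hm
    refine hm.bdd_mul (c := Real.exp t) ?_ ?_
    · refine Continuous.aestronglyMeasurable ?_
      fun_prop
    · filter_upwards with y using (norm_exp_w _ _).le
  have e1 : 2 * Real.pi * (Complex.exp (Complex.I * t * (q:ℂ)^2) * (dysonKernel v n t p q - dysonKernel (u i) n t p q)) =
      ∫ x : ℝ, Complex.exp ((1 + Complex.I * x) * t) * (mK V n x p q - mK (U i) n x p q) := by
    simp only [mul_sub]
    rw [integral_sub (bnd _ j1) (bnd _ j2), h1, h2]
  have e2 : ‖dysonKernel v n t p q - dysonKernel (u i) n t p q‖ₑ ≤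
      ‖2 * Real.pi * (Complex.exp (Complex.I * t * (q:ℂ)^2) * (dysonKernel v n t p q - dysonKernel (u i) n t p q))‖ₑ := by
    rw [enorm_le_iff_norm_le, norm_mul, norm_mul, norm_mul]
    have : ‖Complex.exp (Complex.I * t * (q:ℂ)^2)‖ = 1 := by
      rw [Complex.norm_exp]; simp [← Complex.ofReal_pow]
    rw [this, one_mul, Complex.norm_real, Real.norm_of_nonneg Real.pi_pos.le, Complex.norm_ofNat]
    have := Real.pi_gt_three
    nlinarith [norm_nonneg (dysonKernel v n t p q - dysonKernel (u i) n t p q)]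
  refine e2.trans ?_
  rw [e1]
  refine (enorm_integral_le_lintegral_enorm _).trans (lintegral_mono fun x => ?_)
  rw [enorm_mul]
  gcongr
  rw [← norm_exp_w x t, ofReal_norm]

open scoped ComplexConjugate in
lemma dyson_neg (v : ℝ → ℂ) (p : ℝ) : ∀ n t q,
    dysonKernel v n (-t) p q = (-1) ^ (n+1) * conj (dysonKernel (fun y => conj (v y)) n t p q) := by
  intro n
  induction n with
  | zero =>
    intro t q
    simp only [dysonKernel, phiK]
    split_ifs with h
    · simp; ring
    · simp only [map_div₀, map_mul, map_sub, ← Complex.exp_conj, Complex.conj_I, Complex.conj_ofReal,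
        map_pow, map_one, Complex.conj_conj, Complex.ofReal_neg]
      have : Complex.I * -(t:ℂ) * ((p:ℂ)^2 - (q:ℂ)^2) = -Complex.I * t * ((p:ℂ)^2 - (q:ℂ)^2) := by ring
      rw [this, neg_mul Complex.I ((p:ℂ)^2 - (q:ℂ)^2), div_neg]
      ring
  | succ n ih =>
    intro t q
    simp only [dysonKernel]
    rw [← neg_zero, ← intervalIntegral.integral_comp_neg, intervalIntegral.integral_symm]
    rw [neg_zero, pow_succ _ (n+1), mul_assoc, neg_one_mul, mul_neg]
    rw [← intervalIntegral.intervalIntegral_conj, ← intervalIntegral.integral_const_mul]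
    congr 1
    apply intervalIntegral.integral_congr
    intro s _
    simp only
    rw [← integral_conj, ← integral_const_mul]
    congr 1; ext z
    rw [ih]
    simp only [map_div₀, map_mul, map_sub, ← Complex.exp_conj, Complex.conj_I, Complex.conj_ofReal,
        map_pow, map_one, Complex.conj_conj, Complex.ofReal_neg]
    have : Complex.I * -(s:ℂ) * ((z:ℂ)^2 - (q:ℂ)^2) = -Complex.I * s * ((z:ℂ)^2 - (q:ℂ)^2) := by ring
    rw [this]
    ring

open scoped ComplexConjugate in
lemma L1_all {ι : Type*} {l : Filter ι} [l.IsCountablyGenerated] (v : ℝ → ℂ) (u : ι → ℝ → ℂ) (C : ℝ)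
    (hv : Measurable v) (hvC : ∀ y, ‖v y‖ ≤ C)
    (hU : ∀ᶠ i in l, Measurable (u i) ∧ ∀ y, ‖u i y‖ ≤ C)
    (hlim : ∀ y, Tendsto (fun i => u i y) l (𝓝 (v y))) (n : ℕ) (t p : ℝ) :
    Tendsto (fun i => ∫⁻ q : ℝ, (‖dysonKernel v n t p q - dysonKernel (u i) n t p q‖₊ : ENNReal))
      l (𝓝 0) := by
  rcases le_total 0 t with ht | ht
  · exact L1_nonneg v u C hv hvC hU hlim n t p ht
  · have hcm : Measurable (fun z : ℂ => conj z) := Complex.continuous_conj.measurable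
    have := L1_nonneg (fun y => conj (v y)) (fun i y => conj (u i y)) C (hcm.comp hv)
      (fun y => by rw [RCLike.norm_conj]; exact hvC y)
      (by filter_upwards [hU] with i hi
          exact ⟨hcm.comp hi.1, fun y => by rw [RCLike.norm_conj]; exact hi.2 y⟩)
      (fun y => (Complex.continuous_conj.tendsto _).comp (hlim y)) n (-t) p (by linarith)
    refine this.congr fun i => ?_
    congr 1; ext q
    congr 1
    ext
    have a1 := dyson_neg v p n (-t) q
    have a2 := dyson_neg (u i) p n (-t) q
    rw [neg_neg] at a1 a2
    rw [a1, a2, ← mul_sub, ← map_sub, coe_nnnorm, coe_nnnorm, norm_mul, RCLike.norm_conj]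
    simp

lemma moll_eq (α : ℝ) (W : ℝ → ℝ) (x₀ ε p : ℝ) (hε : 0 < ε) :
    mollPotFT α W x₀ ε p = (α : ℂ) * (((Real.sqrt (2 * Real.pi) : ℝ) : ℂ)⁻¹ *
      ∫ y : ℝ, (W y : ℂ) * Complex.exp (-Complex.I * p * (x₀ + ε * y))) := by
  unfold mollPotFT
  congr 2
  have hε' : (ε : ℂ) ≠ 0 := by exact_mod_cast hε.ne'
  set g : ℝ → ℂ := fun y => (W y : ℂ) * Complex.exp (-Complex.I * p * (x₀ + ε * y)) with hg
  have h1 : ∀ x : ℝ, ((ε⁻¹ * W ((x - x₀) / ε) : ℝ) : ℂ) * Complex.exp (-Complex.I * p * x) =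
      (ε : ℂ)⁻¹ * g ((x - x₀) / ε) := by
    intro x
    simp only [hg]
    push_cast
    rw [mul_div_cancel₀ _ hε', mul_assoc]
    congr 4; ring
  simp only [h1]
  rw [integral_const_mul, integral_sub_right_eq_self (fun x : ℝ => g (x / ε)) x₀, Measure.integral_comp_div,
    abs_of_pos hε, Complex.real_smul, ← mul_assoc, inv_mul_cancel₀ hε', one_mul]

/-- Inductive content of the proof of Theorem 3.1: for each `n ≥ 1`
(`dysonKernel · (n-1)` being `K_{·,n}`), each `t` and each `p`, the `L¹`-in-`q` distance
between the Dyson kernels of the delta potential and of its mollification tends to `0`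
as `ε → 0⁺`. -/
theorem dysonKernel_delta_L1_tendsto (α : ℝ) (hα : α ≠ 0) (x₀ : ℝ)
    (W : ℝ → ℝ) (hWc : Continuous W) (hWs : HasCompactSupport W)
    (hWnn : ∀ x, 0 ≤ W x) (hWint : (∫ x : ℝ, W x) = 1) :
    ∀ n : ℕ, ∀ t p : ℝ, Tendsto
      (fun ε : ℝ => ∫⁻ q : ℝ,
        (‖dysonKernel (deltaFT α x₀) n t p q -
            dysonKernel (mollPotFT α W x₀ ε) n t p q‖₊ : ENNReal))
      (𝓝[>] 0) (𝓝 0) := by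
  intro n t p
  have hWi : Integrable W := hWc.integrable_of_hasCompactSupport hWs
  have nE : ∀ a b : ℝ, ‖Complex.exp (-Complex.I * a * b)‖ = 1 := by
    intro a b; rw [Complex.norm_exp]; simp
  have nE2 : ∀ a b : ℝ, ∀ ε y : ℝ, ‖Complex.exp (-Complex.I * a * (b + ε * y))‖ = 1 := by
    intro a b ε y
    have := nE a (b + ε * y)
    push_cast at this; exact this
  set c : ℂ := ((Real.sqrt (2 * Real.pi) : ℝ) : ℂ) with hc
  refine L1_all (deltaFT α x₀) (fun ε => mollPotFT α W x₀ ε) (|α| * ‖c⁻¹‖) ?_ ?_ ?_ ?_ n t p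
  · unfold deltaFT
    refine Continuous.measurable ?_
    fun_prop
  · intro y
    unfold deltaFT
    rw [norm_mul, nE, norm_mul, mul_one, Complex.norm_real, Real.norm_eq_abs]
  · filter_upwards [self_mem_nhdsWithin] with ε hε
    have hε' : 0 < ε := hε
    constructor
    · have : mollPotFT α W x₀ ε = fun p : ℝ => (α : ℂ) * (((Real.sqrt (2 * Real.pi) : ℝ) : ℂ)⁻¹ *
        ∫ y : ℝ, (W y : ℂ) * Complex.exp (-Complex.I * p * (x₀ + ε * y))) := by
        ext p; exact moll_eq α W x₀ ε p hε'
      rw [this]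
      refine Measurable.const_mul (Measurable.const_mul ?_ _) _
      have h : StronglyMeasurable (fun y : ℝ × ℝ => (W y.2 : ℂ) * Complex.exp (-Complex.I * y.1 * (x₀ + ε * y.2))) := by
        refine Continuous.stronglyMeasurable ?_
        fun_prop
      exact h.integral_prod_right.measurable
    · intro y
      rw [moll_eq α W x₀ ε y hε', norm_mul, norm_mul, Complex.norm_real, Real.norm_eq_abs]
      have : ‖∫ z : ℝ, (W z : ℂ) * Complex.exp (-Complex.I * y * (x₀ + ε * z))‖ ≤ 1 := by
        rw [← hWint]
        apply norm_integral_le_of_norm_le hWi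
        filter_upwards with z
        rw [norm_mul, nE2, mul_one, Complex.norm_real, Real.norm_of_nonneg (hWnn z)]
      gcongr
      exact mul_le_of_le_one_right (norm_nonneg _) this
  · intro y
    have h1 : Tendsto (fun ε : ℝ => ∫ z : ℝ, (W z : ℂ) * Complex.exp (-Complex.I * y * (x₀ + ε * z))) (𝓝[>] 0)
        (𝓝 (∫ z : ℝ, (W z : ℂ) * Complex.exp (-Complex.I * y * x₀))) := by
      refine tendsto_integral_filter_of_dominated_convergence W ?_ ?_ hWi ?_
      · filter_upwards with ε
        refine Continuous.aestronglyMeasurable ?_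
        fun_prop
      · filter_upwards with ε
        filter_upwards with z
        rw [norm_mul, nE2, mul_one, Complex.norm_real, Real.norm_of_nonneg (hWnn z)]
      · filter_upwards with z
        have hcont : Continuous (fun ε : ℝ => (W z : ℂ) * Complex.exp (-Complex.I * y * (x₀ + ε * z))) := by
          fun_prop
        have := (hcont.tendsto 0).mono_left (nhdsWithin_le_nhds (s := Set.Ioi 0))
        simpa using this
    rw [integral_mul_const, integral_complex_ofReal, hWint, Complex.ofReal_one, one_mul] at h1
    have h2 := (h1.const_mul c⁻¹).const_mul (α : ℂ)
    have h3 : deltaFT α x₀ y = (α : ℂ) * (c⁻¹ * Complex.exp (-Complex.I * y * x₀)) := by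
      unfold deltaFT; rw [mul_assoc]
    rw [h3]
    refine h2.congr' ?_
    filter_upwards [self_mem_nhdsWithin] with ε hε
    exact (moll_eq α W x₀ ε y hε).symm
end
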